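/- Let G be a finite abelian group, k: G → [0,∞) an even function (k(−z) = k(z) for all z) with Σ_{z∈G} k(z) = 1, h: G → ℝ any function, and φ, ψ: ℝ → ℝ nondecreasing functions. Then Σ_{x∈G} φ(h(x)) Σ_{y∈G} k(x−y) ψ(h(y)) ≤ Σ_{x∈G} φ(h(x)) ψ(h(x)). In particular, for p even and β > 0, ⟨h^{p−1}, k ∗ tanh(βh)⟩ ≤ ⟨h^{p−1}, tanh(βh)⟩. -/

import Mathlib

open scoped BigOperators ENNReal
open MeasureTheory

noncomputable section

namespace IsingKac

/-- The periodic lattice `Λ_N = {1-N, …, N}²`, realised as `(ℤ/2Nℤ)²`. -/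
abbrev Lat (N : ℕ) : Type := ZMod (2*N) × ZMod (2*N)

instance latNeZero (N : ℕ) [NeZero N] : NeZero (2*N) := ⟨by have := NeZero.ne N; omega⟩

/-- The representative of `v ∈ ℤ/2Nℤ` lying in `{1-N, …, N}`. -/
def latRep (N : ℕ) (v : ZMod (2*N)) : ℤ :=
  if (v.val : ℤ) ≤ (N : ℤ) then (v.val : ℤ) else (v.val : ℤ) - 2*N

def latRep2 (N : ℕ) (z : Lat N) : ℤ × ℤ := (latRep N z.1, latRep N z.2)

/-- The character `e_w(x) = exp(iπ w·x)`. -/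
def eW (w : ℤ × ℤ) (x : ℝ × ℝ) : ℂ :=
  Complex.exp ((Real.pi : ℂ) * Complex.I * ((w.1 : ℂ) * (x.1 : ℂ) + (w.2 : ℂ) * (x.2 : ℂ)))

/-- The point `ε z ∈ Λ_ε ⊂ 𝕋²` corresponding to `z ∈ Λ_N` (with `ε = 1/N`). -/
def latPt (N : ℕ) (z : Lat N) : ℝ × ℝ :=
  ((latRep N z.1 : ℝ) / N, (latRep N z.2 : ℝ) / N)

/-- Discrete Fourier coefficient `f̂(w) = Σ_{x ∈ Λ_ε} ε² f(x) e^{-iπ w·x}`. -/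
def dFT (N : ℕ) [NeZero N] (f : Lat N → ℂ) (w : ℤ × ℤ) : ℂ :=
  ∑ z : Lat N, ((N : ℂ)^2)⁻¹ * f z * (starRingEnd ℂ) (eW w (latPt N z))

/-- The extension operator `(Ex f)(x) = (1/4) Σ_{w ∈ Λ_N} f̂(w) e^{iπ w·x}` for `x ∈ 𝕋²`. -/
def Ex (N : ℕ) [NeZero N] (f : Lat N → ℂ) (x : ℝ × ℝ) : ℂ :=
  (1/4 : ℂ) * ∑ z : Lat N, dFT N f (latRep2 N z) * eW (latRep2 N z) x

/-- Discrete `L^p` norm on `Λ_ε`, `p ∈ [1,∞]`. -/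
def dLp (N : ℕ) [NeZero N] (p : ℝ≥0∞) {E : Type*} [NormedAddCommGroup E]
    (f : Lat N → E) : ℝ :=
  if p = ∞ then ⨆ z : Lat N, ‖f z‖
  else (∑ z : Lat N, ((N : ℝ)^2)⁻¹ * ‖f z‖ ^ p.toReal) ^ (1/p.toReal)

/-- Fundamental domain of the torus `𝕋² = [-1,1]²`. -/
def box : Set (ℝ × ℝ) := Set.Icc (-1 : ℝ) 1 ×ˢ Set.Icc (-1 : ℝ) 1

/-- `L^p(𝕋²)` norm, `p ∈ [1,∞]`. -/
def cLp (p : ℝ≥0∞) {E : Type*} [NormedAddCommGroup E] (g : ℝ × ℝ → E) : ℝ≥0∞ :=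
  eLpNorm g p (volume.restrict box)

/-- Euclidean norm on `ℝ²`. -/
def enorm2 (r : ℝ × ℝ) : ℝ := Real.sqrt (r.1^2 + r.2^2)

/-- A Littlewood–Paley partition of unity `(χ̃, χ)` on `ℝ²`. -/
structure LPpartition : Type where
  chit : ℝ × ℝ → ℝ
  chi : ℝ × ℝ → ℝ
  cont_t : Continuous chit
  cont : Continuous chi
  mem_t : ∀ r, chit r ∈ Set.Icc (0:ℝ) 1
  mem : ∀ r, chi r ∈ Set.Icc (0:ℝ) 1
  supp_t : ∀ r : ℝ × ℝ, 4/3 < enorm2 r → chit r = 0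
  supp : ∀ r : ℝ × ℝ, enorm2 r < 3/4 ∨ 8/3 < enorm2 r → chi r = 0
  partition : ∀ r : ℝ × ℝ, chit r + ∑' k : ℕ, chi ((2:ℝ)^(-(k:ℤ)) • r) = 1

/-- `χ_k`, for `k ≥ -1`. -/
def LPchi (P : LPpartition) (k : ℤ) : ℝ × ℝ → ℝ :=
  if k = -1 then P.chit else fun r => P.chi ((2:ℝ)^(-k) • r)

/-- The Littlewood–Paley block `δ_k (Ex f)` of (the extension of) a lattice function. -/
def dBlock (N : ℕ) [NeZero N] (P : LPpartition) (k : ℤ) (f : Lat N → ℂ) (x : ℝ × ℝ) : ℂ :=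
  (1/4 : ℂ) * ∑ z : Lat N,
    ((LPchi P k ((latRep N z.1 : ℝ), (latRep N z.2 : ℝ)) : ℝ) : ℂ) *
      dFT N f (latRep2 N z) * eW (latRep2 N z) x

/-- Discrete Besov norm `‖f‖_{B^ν_{p,q}(Λ_ε)}`. -/
def dBesov (N : ℕ) [NeZero N] (P : LPpartition) (ν : ℝ) (p q : ℝ≥0∞) (f : Lat N → ℂ) : ℝ :=
  if q = ∞ then
    ⨆ k : ℕ, (2:ℝ)^(ν * ((k:ℝ) - 1)) * dLp N p (fun z => dBlock N P ((k:ℤ)-1) f (latPt N z))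
  else
    (∑' k : ℕ, ((2:ℝ)^(ν * ((k:ℝ) - 1)) *
      dLp N p (fun z => dBlock N P ((k:ℤ)-1) f (latPt N z))) ^ q.toReal) ^ (1/q.toReal)

/-- The `C^{-ν}` (Besov–Hölder) norm of the extension `Ex f`:
`sup_{k ≥ -1} 2^{-νk} ‖δ_k (Ex f)‖_{L^∞(𝕋²)}`. -/
def holderNeg (N : ℕ) [NeZero N] (P : LPpartition) (ν : ℝ) (f : Lat N → ℂ) : ℝ :=
  ⨆ k : ℕ, (2:ℝ)^(-ν * ((k:ℝ) - 1)) * ⨆ x : ℝ × ℝ, ‖dBlock N P ((k:ℤ)-1) f x‖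

/-- Spin values. -/
def spin (s : Bool) : ℝ := if s then 1 else -1

/-- Hamiltonian `H(σ) = (β/2) Σ_{x,y} k(x-y) σ_x σ_y + b Σ_x σ_x`. -/
def hamil (N : ℕ) [NeZero N] (kk : Lat N → ℝ) (β b : ℝ) (σ : Lat N → ℝ) : ℝ :=
  β/2 * ∑ x : Lat N, ∑ y : Lat N, kk (x - y) * σ x * σ y + b * ∑ x : Lat N, σ x

/-- Gibbs expectation `E^γ_{β,b}[F]`. -/
def gibbsE (N : ℕ) [NeZero N] (kk : Lat N → ℝ) (β b : ℝ) (F : (Lat N → ℝ) → ℝ) : ℝ :=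
  (∑ s : Lat N → Bool, Real.exp (hamil N kk β b (fun x => spin (s x))) * F (fun x => spin (s x))) /
  (∑ s : Lat N → Bool, Real.exp (hamil N kk β b (fun x => spin (s x))))

/-- The profile `𝔎 : ℝ² → [0,1]`, twice differentiable, radial, supported in `B(0,3)`,
not identically zero. -/
structure KacProfile : Type where
  f : ℝ × ℝ → ℝ
  smooth : ContDiff ℝ 2 f
  mem : ∀ x, f x ∈ Set.Icc (0:ℝ) 1
  radial : ∀ x y : ℝ × ℝ, enorm2 x = enorm2 y → f x = f y
  supp : ∀ x : ℝ × ℝ, 3 < enorm2 x → f x = 0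
  nontriv : ∃ x, f x ≠ 0

/-- The Kac kernel `k_γ(z) = c γ² 𝔎(γ·z)` (shortest periodic representative), `k_γ(0)=0`. -/
def kGamma (𝔎 : KacProfile) (N : ℕ) (c γ : ℝ) (z : Lat N) : ℝ :=
  if z = 0 then 0 else c * γ^2 * 𝔎.f (γ * (latRep N z.1 : ℝ), γ * (latRep N z.2 : ℝ))

/-- `γ = N^{-1/2}`, so that `γ² = ε = 1/N`. -/
def gam (N : ℕ) : ℝ := Real.sqrt ((N : ℝ)⁻¹)

/-- Fourier transform `K̂_γ(ω) = Σ_z k_γ(z) e^{-iπ ω·(εz)}` of the macroscopic kernel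
(real, since the kernel is even). -/
def kHat (N : ℕ) [NeZero N] (kk : Lat N → ℝ) (ω : ℤ × ℤ) : ℝ :=
  ∑ z : Lat N, kk z *
    Real.cos (Real.pi * ((ω.1 : ℝ) * (latRep N z.1 : ℝ) / N + (ω.2 : ℝ) * (latRep N z.2 : ℝ) / N))

/-- The renormalisation constant
`𝔠_γ = (1/4) Σ_{ω ∈ Λ_N \ {0}} |K̂_γ(ω)|² / (γ^{-2} (1-K̂_γ(ω)))`. -/
def cGamma (N : ℕ) [NeZero N] (kk : Lat N → ℝ) (γ : ℝ) : ℝ :=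
  (1/4) * ∑ z : Lat N, if z = (0 : Lat N) then 0 else
    (kHat N kk (latRep2 N z))^2 / ((γ^2)⁻¹ * (1 - kHat N kk (latRep2 N z)))

/-- Critical inverse temperature `β = 1 + γ²(𝔠_γ + A)`. -/
def betaCrit (𝔎 : KacProfile) (N : ℕ) [NeZero N] (c A : ℝ) : ℝ :=
  1 + (gam N)^2 * (cGamma N (kGamma 𝔎 N c (gam N)) (gam N) + A)

/-- The fluctuation field `X_γ(x) = γ^{-1} Σ_z k_γ(ε^{-1}x - z) σ_z`, as a function on `Λ_N`. -/
def fluct (N : ℕ) [NeZero N] (kk : Lat N → ℝ) (γ : ℝ) (σ : Lat N → ℝ) (z : Lat N) : ℝ :=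
  γ⁻¹ * ∑ y : Lat N, kk (z - y) * σ y

/-- The rescaled step field `γ^{-1} σ_{⌊ε^{-1}x⌋}` on the torus (without the `γ^{-1}`). -/
def stepField (N : ℕ) (σ : Lat N → ℝ) (x : ℝ × ℝ) : ℝ :=
  σ (((⌊(N : ℝ) * x.1⌋ : ℤ) : ZMod (2*N)), ((⌊(N : ℝ) * x.2⌋ : ℤ) : ZMod (2*N)))

/-- Fourier coefficient on the torus: `ĝ(ω) = ∫_{𝕋²} g(x) e^{-iπω·x} dx`. -/
def cFT (g : ℝ × ℝ → ℂ) (ω : ℤ × ℤ) : ℂ :=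
  ∫ x in box, g x * (starRingEnd ℂ) (eW ω x)


/-! ### Additional definitions -/

/-- Nearest-neighbour Dirichlet sum `Σ_{x,y ∈ Λ_ε, |x-y|=ε} ε² (f(y)-f(x))²`. -/
def nnSum (N : ℕ) [NeZero N] (f : Lat N → ℝ) : ℝ :=
  ∑ x : Lat N, ((N : ℝ)^2)⁻¹ *
    ((f (x + (1, 0)) - f x)^2 + (f (x + (0, 1)) - f x)^2 +
     (f (x - (1, 0)) - f x)^2 + (f (x - (0, 1)) - f x)^2)

/-- The `d`-dimensional periodic lattice `Λ_N^d`. -/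
abbrev LatD (d N : ℕ) : Type := Fin d → ZMod (2*N)

/-- Discrete `L^p` norm on `Λ_ε^d`, `p ∈ [1,∞]`. -/
def dLpD (d N : ℕ) [NeZero N] (p : ℝ≥0∞) (f : LatD d N → ℂ) : ℝ :=
  if p = ∞ then ⨆ z : LatD d N, ‖f z‖
  else (∑ z : LatD d N, ((N : ℝ)^d)⁻¹ * ‖f z‖ ^ p.toReal) ^ (1/p.toReal)

/-- `Σ_{w ∈ Λ_N^d} χ(λ w) e_w`, evaluated at the lattice point `ε z ∈ Λ_ε^d`. -/
def gLam (d N : ℕ) [NeZero N] (χ : (Fin d → ℝ) → ℝ) (lam : ℝ) (z : LatD d N) : ℂ :=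
  ∑ w : LatD d N, ((χ (fun i => lam * (latRep N (w i) : ℝ)) : ℝ) : ℂ) *
    Complex.exp ((Real.pi : ℂ) * Complex.I *
      ((∑ i : Fin d, (latRep N (w i) : ℝ) * ((latRep N (z i) : ℝ) / N) : ℝ) : ℂ))

/-- Second partial derivative of `φ` in directions `v, w`. -/
def pd2 (φ : ℝ × ℝ → ℝ) (v w : ℝ × ℝ) : ℝ × ℝ → ℝ :=
  fun x => fderiv ℝ (fun y => fderiv ℝ φ y v) x w

/-- `max_{i,j ∈ {1,2}} ‖∂_i ∂_j φ‖_{L^∞}`. -/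
def secondDerivBound (φ : ℝ × ℝ → ℝ) : ℝ :=
  max (max (⨆ x : ℝ × ℝ, |pd2 φ (1,0) (1,0) x|) (⨆ x : ℝ × ℝ, |pd2 φ (1,0) (0,1) x|))
      (max (⨆ x : ℝ × ℝ, |pd2 φ (0,1) (1,0) x|) (⨆ x : ℝ × ℝ, |pd2 φ (0,1) (0,1) x|))

/-- The Littlewood–Paley block `δ_k g` of a function on the torus. -/
def cBlock (P : LPpartition) (k : ℤ) (g : ℝ × ℝ → ℂ) (x : ℝ × ℝ) : ℂ :=
  (1/4 : ℂ) * ∑' ω : ℤ × ℤ, ((LPchi P k ((ω.1 : ℝ), (ω.2 : ℝ)) : ℝ) : ℂ) * cFT g ω * eW ω x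

/-- Besov norm `‖g‖_{B^ν_{1,1}(𝕋²)} = Σ_{k ≥ -1} 2^{νk} ‖δ_k g‖_{L¹(𝕋²)}`. -/
def cBesov11 (P : LPpartition) (ν : ℝ) (g : ℝ × ℝ → ℂ) : ℝ :=
  ∑' k : ℕ, (2:ℝ) ^ (ν * ((k:ℝ) - 1)) * ∫ x in box, ‖cBlock P ((k:ℤ)-1) g x‖

open scoped NNReal

section Rearrangement

variable {G R : Type*} [AddGroup G] [Fintype G]

theorem sum_sub_mul_eq_sum_mul_neg_add [NonUnitalNonAssocSemiring R] (k g : G → R) (x : G) :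
    ∑ y, k (x - y) * g y = ∑ z, k z * g (-z + x) := by
  simpa only [Equiv.subLeft_apply, neg_sub, sub_add_cancel] using
    (Equiv.subLeft x).sum_comp fun z ↦ k z * g (-z + x)

/- Convolution with `k` is a combination, with weights `k z`, of the translations `x ↦ -z + x`.
Each translation permutes `G`, so the rearrangement inequality applies to it. -/
theorem sum_mul_conv_le_of_monovary [CommSemiring R] [LinearOrder R] [IsStrictOrderedRing R]
    [ExistsAddOfLE R] {k f g : G → R} (hk : ∀ z, 0 ≤ k z) (hfg : Monovary f g) :
    ∑ x, f x * ∑ y, k (x - y) * g y ≤ (∑ z, k z) * ∑ x, f x * g x :=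
  calc ∑ x, f x * ∑ y, k (x - y) * g y
    _ = ∑ z, k z * ∑ x, f x * g (-z + x) := by
      simp only [sum_sub_mul_eq_sum_mul_neg_add, Finset.mul_sum, mul_left_comm]
      exact Finset.sum_comm
    _ ≤ ∑ z, k z * ∑ x, f x * g x := Finset.sum_le_sum fun z _ ↦
      mul_le_mul_of_nonneg_left
        (hfg.sum_mul_comp_perm_le_sum_mul (σ := Equiv.addLeft (-z))) (hk z)
    _ = (∑ z, k z) * ∑ x, f x * g x := (Finset.sum_mul ..).symm

end Rearrangement

theorem monotone_pow_pred_of_even {R : Type*} [Semiring R] [LinearOrder R] [IsStrictOrderedRing R]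
    [ExistsAddOfLE R] {p : ℕ} (hp : Even p) : Monotone fun t : R ↦ t ^ (p - 1) := by
  -- For `p = 0` truncated subtraction gives the constant function `t ^ 0`.
  obtain rfl | hp_pos := p.eq_zero_or_pos
  · simpa only [zero_tsub, pow_zero] using monotone_const
  · exact (Nat.Even.sub_odd hp_pos hp odd_one).strictMono_pow.monotone

theorem tanh_strictMono : StrictMono Real.tanh := fun a b hab ↦ by
  rwa [← Real.artanh_lt_artanh_iff ⟨Real.neg_one_lt_tanh a, Real.tanh_lt_one a⟩
    ⟨Real.neg_one_lt_tanh b, Real.tanh_lt_one b⟩, Real.artanh_tanh, Real.artanh_tanh]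

theorem statement16_general {G : Type*} [AddGroup G] [Fintype G] (k : G → ℝ)
    (hk0 : ∀ z, 0 ≤ k z) (hk1 : ∑ z, k z = 1) (h : G → ℝ) :
    (∀ φ ψ : ℝ → ℝ, Monotone φ → Monotone ψ →
      ∑ x, φ (h x) * ∑ y, k (x - y) * ψ (h y) ≤ ∑ x, φ (h x) * ψ (h x)) ∧
    (∀ p : ℕ, Even p → ∀ β : ℝ, 0 ≤ β →
      ∑ x, h x ^ (p - 1) * ∑ y, k (x - y) * Real.tanh (β * h y) ≤
        ∑ x, h x ^ (p - 1) * Real.tanh (β * h x)) := by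
  have conv_le : ∀ φ ψ : ℝ → ℝ, Monotone φ → Monotone ψ →
      ∑ x, φ (h x) * ∑ y, k (x - y) * ψ (h y) ≤ ∑ x, φ (h x) * ψ (h x) := fun φ ψ hφ hψ ↦ by
    simpa only [hk1, one_mul, Function.comp_apply] using
      sum_mul_conv_le_of_monovary hk0 ((hφ.monovary hψ).comp_right h)
  exact ⟨conv_le, fun p hp β hβ ↦ conv_le _ _ (monotone_pow_pred_of_even hp)
    (tanh_strictMono.monotone.comp (monotone_mul_left_of_nonneg hβ))⟩

/-- convolution/rearrangement inequality for monotone images of a field on a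
finite abelian group, and its `tanh` consequence. -/
theorem statement16 {G : Type*} [AddCommGroup G] [Fintype G] (k : G → ℝ)
    (hk0 : ∀ z, 0 ≤ k z) (hke : ∀ z, k (-z) = k z) (hk1 : (∑ z : G, k z) = 1)
    (h : G → ℝ) :
    (∀ φ ψ : ℝ → ℝ, Monotone φ → Monotone ψ →
      (∑ x : G, φ (h x) * ∑ y : G, k (x - y) * ψ (h y)) ≤ ∑ x : G, φ (h x) * ψ (h x)) ∧
    (∀ p : ℕ, Even p → ∀ β : ℝ, 0 < β →
      (∑ x : G, (h x)^(p-1) * ∑ y : G, k (x - y) * Real.tanh (β * h y)) ≤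
        ∑ x : G, (h x)^(p-1) * Real.tanh (β * h x)) := by
  have ⟨conv_le, tanh_conv_le⟩ := statement16_general k hk0 hk1 h
  exact ⟨conv_le, fun p hp β hβ ↦ tanh_conv_le p hp β hβ.le⟩

end IsingKac
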